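/- Let T be a backward Kantorovich operator on a compact metric space X with finite Mather constant c. If g ∈ USC_σ(X) is bounded above and is a very proper backward solution at level k, meaning Tg + k = g pointwise and ∫_X g dμ > −∞ for some minimal measure μ, then k = c. -/

import Mathlib

open MeasureTheory Filter Topology
open scoped ENNReal

/-- The `n`-fold inf-convolution iterates of a transfer functional:
`iterT 𝒯 n` is `𝒯_{n+1} = 𝒯 ⋆ ⋯ ⋆ 𝒯` (`n+1` factors). -/
noncomputable def iterT {X : Type*} [MeasurableSpace X]
    (𝒯 : ProbabilityMeasure X → ProbabilityMeasure X → EReal) :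
    ℕ → ProbabilityMeasure X → ProbabilityMeasure X → EReal
  | 0 => 𝒯
  | n + 1 => fun μ ν => ⨅ σ : ProbabilityMeasure X, 𝒯 μ σ + iterT 𝒯 n σ ν

/-! Along a chain `μ = σ₀, σ₁, …, σₙ₊₁ = ν` the averages `α` of `σ₀, …, σₙ` and `β` of
`σ₁, …, σₙ₊₁` satisfy `𝒯 α β ≤ (1 / (n + 1)) ∑ 𝒯 σᵢ σᵢ₊₁` by convexity, while
`α - β = (μ - ν) / (n + 1)` tends to `0` uniformly in the chain. Compactness and lower
semicontinuity then turn `y < inf 𝒯 σ σ` into `(n + 1) y ≤ 𝒯ₙ₊₁` for all large `n`.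

A solution of `T g + k = g` satisfies `Tⁿ g = g - n k`. Duality at `n = 1`, tested on the minimal
measure, gives `k ≤ c`. Duality at large `n` bounds `∫ g dμ - n k` by `sup g - n y` for every
`y < c`, hence `y ≤ k`. -/

section ConvexCombination

open scoped BoundedContinuousFunction

variable {X : Type*} [MeasurableSpace X]

lemma exists_probabilityMeasure_eq_smul_add_smul (μ₁ μ₂ : ProbabilityMeasure X) {t : ℝ}
    (h₀ : 0 ≤ t) (h₁ : t ≤ 1) :
    ∃ μ : ProbabilityMeasure X, (μ : Measure X) =
      ENNReal.ofReal t • (μ₁ : Measure X) + ENNReal.ofReal (1 - t) • (μ₂ : Measure X) := by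
  refine ⟨⟨_, ⟨?_⟩⟩, rfl⟩
  rw [Measure.add_apply, Measure.smul_apply, Measure.smul_apply, measure_univ, measure_univ,
    smul_eq_mul, smul_eq_mul, mul_one, mul_one, ← ENNReal.ofReal_add h₀ (sub_nonneg.2 h₁),
    add_sub_cancel, ENNReal.ofReal_one]

lemma ofReal_add_one_smul_average (μ ν : Measure X) {a : ℝ} (ha : 0 ≤ a) :
    ENNReal.ofReal (a + 1) •
        (ENNReal.ofReal (a + 1)⁻¹ • μ + ENNReal.ofReal (1 - (a + 1)⁻¹) • ν) =
      μ + ENNReal.ofReal a • ν := by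
  have ha' : 0 < a + 1 := by positivity
  rw [smul_add, smul_smul, smul_smul, ← ENNReal.ofReal_mul ha'.le, ← ENNReal.ofReal_mul ha'.le,
    mul_inv_cancel₀ ha'.ne', mul_sub, mul_inv_cancel₀ ha'.ne', mul_one, add_sub_cancel_right,
    ENNReal.ofReal_one, one_smul]

lemma integral_ofReal_smul_add [TopologicalSpace X] [OpensMeasurableSpace X]
    (μ ν : Measure X) [IsFiniteMeasure μ] [IsFiniteMeasure ν] {a : ℝ} (ha : 0 ≤ a) (f : X →ᵇ ℝ) :
    ∫ x, f x ∂(ENNReal.ofReal a • μ + ν) = a * ∫ x, f x ∂μ + ∫ x, f x ∂ν := by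
  rw [integral_add_measure ((f.integrable μ).smul_measure ENNReal.ofReal_ne_top) (f.integrable ν),
    integral_smul_measure, ENNReal.toReal_ofReal ha, smul_eq_mul]

lemma mul_abs_integral_sub_le_of_smul_add_eq [TopologicalSpace X] [OpensMeasurableSpace X]
    {α β μ ν : ProbabilityMeasure X} {a : ℝ} (ha : 0 ≤ a)
    (h : ENNReal.ofReal a • (α : Measure X) + (ν : Measure X) =
      ENNReal.ofReal a • (β : Measure X) + (μ : Measure X)) (f : X →ᵇ ℝ) :
    a * |∫ x, f x ∂(α : Measure X) - ∫ x, f x ∂(β : Measure X)| ≤ 2 * ‖f‖ := by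
  have hint := congrArg (fun ρ : Measure X => ∫ x, f x ∂ρ) h
  simp only [integral_ofReal_smul_add _ _ ha] at hint
  calc a * |∫ x, f x ∂(α : Measure X) - ∫ x, f x ∂(β : Measure X)|
      = |∫ x, f x ∂(μ : Measure X) - ∫ x, f x ∂(ν : Measure X)| := by
        nth_rw 1 [← abs_of_nonneg ha]
        rw [← abs_mul]
        congr 1
        linear_combination hint
    _ ≤ ‖f‖ + ‖f‖ := (abs_sub _ _).trans
        (add_le_add (f.norm_integral_le_norm _) (f.norm_integral_le_norm _))
    _ = 2 * ‖f‖ := (two_mul _).symm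

end ConvexCombination

section Transfer

variable {X : Type*} [MeasurableSpace X]
  {𝒯 : ProbabilityMeasure X → ProbabilityMeasure X → EReal}

/-- Joint convexity of a transfer functional. Convex combinations of probability measures are
expressed through the underlying measures, since `ProbabilityMeasure X` carries no convex
structure. -/
def JointlyConvex (𝒯 : ProbabilityMeasure X → ProbabilityMeasure X → EReal) : Prop :=
  ∀ (μ₁ ν₁ μ₂ ν₂ μ ν : ProbabilityMeasure X) (t : ℝ), 0 ≤ t → t ≤ 1 →
    (μ : Measure X) =
      ENNReal.ofReal t • (μ₁ : Measure X) + ENNReal.ofReal (1 - t) • (μ₂ : Measure X) →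
    (ν : Measure X) =
      ENNReal.ofReal t • (ν₁ : Measure X) + ENNReal.ofReal (1 - t) • (ν₂ : Measure X) →
    𝒯 μ ν ≤ (t : EReal) * 𝒯 μ₁ ν₁ + ((1 - t : ℝ) : EReal) * 𝒯 μ₂ ν₂

lemma coe_mul_le_iterT {m : ℝ} (hm : ∀ μ ν, (m : EReal) ≤ 𝒯 μ ν) (n : ℕ)
    (μ ν : ProbabilityMeasure X) : (((n + 1) * m : ℝ) : EReal) ≤ iterT 𝒯 n μ ν := by
  induction n generalizing μ with
  | zero => simpa [iterT] using hm μ ν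
  | succ n ih =>
    rw [Nat.cast_succ, add_one_mul ((n : ℝ) + 1), add_comm, EReal.coe_add]
    exact le_iInf fun σ => add_le_add (hm μ σ) (ih σ)

lemma exists_coe_eq_and_lt_sub_of_add_lt {a b : EReal} {r : ℝ} (ha : a ≠ ⊥) (hb : b ≠ ⊥)
    (h : a + b < r) : ∃ s : ℝ, a = s ∧ b < ((r - s : ℝ) : EReal) := by
  have ha' : a ≠ ⊤ := by
    rintro rfl
    exact not_top_lt (EReal.top_add_of_ne_bot hb ▸ h)
  lift a to ℝ using ⟨ha', ha⟩
  refine ⟨a, rfl, ?_⟩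
  rw [EReal.coe_sub]
  exact EReal.lt_sub_iff_add_lt (.inl (EReal.coe_ne_bot _)) (.inl (EReal.coe_ne_top _)) |>.2
    (add_comm (a : EReal) b ▸ h)

lemma exists_lt_of_iterT_succ_lt {m : ℝ} (hm : ∀ μ ν, (m : EReal) ≤ 𝒯 μ ν) {n : ℕ}
    {μ ν : ProbabilityMeasure X} {r : ℝ} (h : iterT 𝒯 (n + 1) μ ν < r) :
    ∃ (σ : ProbabilityMeasure X) (s : ℝ), 𝒯 μ σ = s ∧ iterT 𝒯 n σ ν < ((r - s : ℝ) : EReal) := by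
  obtain ⟨σ, hσ⟩ := iInf_lt_iff.1 h
  exact ⟨σ, exists_coe_eq_and_lt_sub_of_add_lt (ne_bot_of_le_ne_bot (EReal.coe_ne_bot _) (hm μ σ))
    (ne_bot_of_le_ne_bot (EReal.coe_ne_bot _) (coe_mul_le_iterT hm n σ ν)) hσ⟩

lemma JointlyConvex.exists_le_div_of_iterT_lt (hconv : JointlyConvex 𝒯) {m : ℝ}
    (hm : ∀ μ ν, (m : EReal) ≤ 𝒯 μ ν) {n : ℕ} {μ ν : ProbabilityMeasure X} {r : ℝ}
    (h : iterT 𝒯 n μ ν < r) :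
    ∃ α β : ProbabilityMeasure X, 𝒯 α β ≤ ((r / (n + 1) : ℝ) : EReal) ∧
      ENNReal.ofReal (n + 1) • (α : Measure X) + (ν : Measure X) =
        ENNReal.ofReal (n + 1) • (β : Measure X) + (μ : Measure X) := by
  induction n generalizing μ r with
  | zero => exact ⟨μ, ν, by simpa [iterT] using h.le, by simp [add_comm]⟩
  | succ n ih =>
    obtain ⟨σ, s, hs, hσ⟩ := exists_lt_of_iterT_succ_lt hm h
    obtain ⟨α, β, hαβ, hdiff⟩ := ih hσ
    have hn : (0 : ℝ) ≤ n + 1 := by positivity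
    have ht₀ : 0 ≤ ((n : ℝ) + 1 + 1)⁻¹ := by positivity
    have ht₁ : ((n : ℝ) + 1 + 1)⁻¹ ≤ 1 := inv_le_one_of_one_le₀ (le_add_of_nonneg_left hn)
    obtain ⟨α', hα'⟩ := exists_probabilityMeasure_eq_smul_add_smul μ α ht₀ ht₁
    obtain ⟨β', hβ'⟩ := exists_probabilityMeasure_eq_smul_add_smul σ β ht₀ ht₁
    rw [Nat.cast_succ]
    refine ⟨α', β', ?_, ?_⟩
    · calc 𝒯 α' β'
          ≤ (((n : ℝ) + 1 + 1)⁻¹ : ℝ) * 𝒯 μ σ + ((1 - ((n : ℝ) + 1 + 1)⁻¹ : ℝ) : EReal) * 𝒯 α β :=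
            hconv _ _ _ _ _ _ _ ht₀ ht₁ hα' hβ'
        _ ≤ (((n : ℝ) + 1 + 1)⁻¹ : ℝ) * s +
              ((1 - ((n : ℝ) + 1 + 1)⁻¹ : ℝ) : EReal) * (((r - s) / (n + 1) : ℝ) : EReal) := by
            rw [hs]
            gcongr
        _ = ((r / (n + 1 + 1) : ℝ) : EReal) := by
            rw [← EReal.coe_mul, ← EReal.coe_mul, ← EReal.coe_add]
            congr 1
            field_simp
            ring
    · rw [hα', hβ', ofReal_add_one_smul_average _ _ hn, ofReal_add_one_smul_average _ _ hn,
        add_assoc, hdiff]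
      abel

end Transfer

lemma nonpos_of_eventually_natCast_mul_le {a b : ℝ} (h : ∀ᶠ n : ℕ in atTop, n * a ≤ b) :
    a ≤ 0 := by
  by_contra! ha
  obtain ⟨n, hn, hn'⟩ :=
    (h.and ((tendsto_natCast_atTop_atTop.atTop_mul_const ha).eventually_gt_atTop b)).exists
  exact hn.not_gt hn'

section Compact

open scoped BoundedContinuousFunction

variable {X : Type*} [TopologicalSpace X] [T2Space X] [CompactSpace X] [HasOuterApproxClosed X]
  [MeasurableSpace X] [BorelSpace X]
  {𝒯 : ProbabilityMeasure X → ProbabilityMeasure X → EReal}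

lemma exists_nat_forall_lt_of_forall_lt_diag
    (hlsc : LowerSemicontinuous
      (fun p : ProbabilityMeasure X × ProbabilityMeasure X => 𝒯 p.1 p.2))
    {y : EReal} (hy : ∀ σ, y < 𝒯 σ σ) (C : ℝ) :
    ∃ N : ℕ, ∀ α β : ProbabilityMeasure X,
      (∀ f : X →ᵇ ℝ, N * |∫ x, f x ∂(α : Measure X) - ∫ x, f x ∂(β : Measure X)| ≤ C * ‖f‖) →
        y < 𝒯 α β := by
  by_contra! hne
  let K (N : ℕ) : Set (ProbabilityMeasure X × ProbabilityMeasure X) :=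
    {p | (∀ f : X →ᵇ ℝ, N * |∫ x, f x ∂(p.1 : Measure X) - ∫ x, f x ∂(p.2 : Measure X)| ≤
      C * ‖f‖) ∧ 𝒯 p.1 p.2 ≤ y}
  have hK_anti (N : ℕ) : K (N + 1) ⊆ K N := fun p hp =>
    ⟨fun f => le_trans (by gcongr; simp) (hp.1 f), hp.2⟩
  have hK_closed (N : ℕ) : IsClosed (K N) := by
    refine .and ?_ (hlsc.isClosed_preimage y)
    simp only [Set.ofPred_forall]
    refine isClosed_iInter fun f => ?_
    have hf := ProbabilityMeasure.continuous_integral_boundedContinuousFunction f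
    exact isClosed_le (continuous_const.mul
      ((hf.comp continuous_fst).sub (hf.comp continuous_snd)).abs) continuous_const
  obtain ⟨⟨α, β⟩, hαβ⟩ := IsCompact.nonempty_iInter_of_sequence_nonempty_isCompact_isClosed K
    hK_anti (fun N => let ⟨α, β, h⟩ := hne N; ⟨(α, β), h⟩) (hK_closed 0).isCompact hK_closed
  rw [Set.mem_iInter] at hαβ
  have h_eq : α = β := by
    refine ProbabilityMeasure.toMeasure_injective
      (ext_of_forall_integral_eq_of_IsFiniteMeasure fun f => ?_)
    rw [← sub_eq_zero, ← abs_nonpos_iff]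
    exact nonpos_of_eventually_natCast_mul_le (.of_forall fun N => (hαβ N).1 f)
  subst h_eq
  exact (hy α).not_ge (hαβ 0).2

lemma JointlyConvex.eventually_coe_mul_le_iterT (hconv : JointlyConvex 𝒯)
    (hbdd : ∃ m : ℝ, ∀ μ ν, (m : EReal) ≤ 𝒯 μ ν)
    (hlsc : LowerSemicontinuous
      (fun p : ProbabilityMeasure X × ProbabilityMeasure X => 𝒯 p.1 p.2))
    {y : ℝ} (hy : (y : EReal) < ⨅ σ, 𝒯 σ σ) :
    ∀ᶠ n : ℕ in atTop, ∀ μ ν, (((n + 1) * y : ℝ) : EReal) ≤ iterT 𝒯 n μ ν := by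
  obtain ⟨m, hm⟩ := hbdd
  obtain ⟨N, hN⟩ := exists_nat_forall_lt_of_forall_lt_diag hlsc
    (fun σ => hy.trans_le (iInf_le _ σ)) 2
  filter_upwards [eventually_ge_atTop N] with n hn μ ν
  by_contra! hlt
  obtain ⟨α, β, hαβ, hdiff⟩ := hconv.exists_le_div_of_iterT_lt hm hlt
  rw [mul_div_cancel_left₀ y (by positivity)] at hαβ
  have hNn : (N : ℝ) ≤ n + 1 := mod_cast hn.trans n.le_succ
  refine (hN α β fun f => ?_).not_ge hαβ
  exact (mul_le_mul_of_nonneg_right hNn (abs_nonneg _)).trans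
    (mul_abs_integral_sub_le_of_smul_add_eq (by positivity) hdiff f)

end Compact

lemma iterate_eq_sub_nsmul_of_add_const_eq {X R : Type*} [AddCommGroup R] {T : (X → R) → X → R}
    (haff : ∀ (f : X → R) (a : R) (x : X), T (fun y => f y + a) x = T f x + a)
    {g : X → R} {k : R} (hsol : ∀ x, T g x + k = g x) (n : ℕ) :
    T^[n] g = fun x => g x - n • k := by
  induction n with
  | zero => simp
  | succ n ih =>
    funext x
    simp only [Function.iterate_succ_apply', ih, sub_eq_add_neg, haff, ← hsol x, succ_nsmul]
    abel

/- The maximum with `0` covers non-integrable `g`, whose Bochner integral is `0` by convention. -/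
lemma integral_le_max_zero_of_le {X : Type*} [MeasurableSpace X] {ν : Measure X}
    [IsProbabilityMeasure ν] {g : X → ℝ} {M : ℝ} (hM : ∀ x, g x ≤ M) :
    ∫ x, g x ∂ν ≤ max M 0 := by
  by_cases hg : Integrable g ν
  · refine le_max_of_le_left ?_
    simpa using integral_mono hg (integrable_const M) hM
  · exact (integral_undef hg).trans_le (le_max_right _ _)

theorem stmt7_general {X : Type*} [TopologicalSpace X] [T2Space X] [CompactSpace X]
    [HasOuterApproxClosed X] [MeasurableSpace X] [BorelSpace X]
    (𝒯 : ProbabilityMeasure X → ProbabilityMeasure X → EReal)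
    (hbdd : ∃ m : ℝ, ∀ μ ν, (m : EReal) ≤ 𝒯 μ ν)
    (hlsc : LowerSemicontinuous
      (fun p : ProbabilityMeasure X × ProbabilityMeasure X => 𝒯 p.1 p.2))
    (hconv : JointlyConvex 𝒯)
    (c : ℝ) (hc : (c : EReal) = ⨅ μ, 𝒯 μ μ)
    (μ : ProbabilityMeasure X) (hmin : 𝒯 μ μ = (c : EReal))
    (T : (X → ℝ) → X → ℝ)
    (haff : ∀ (f : X → ℝ) (a : ℝ) (x : X), T (fun y => f y + a) x = T f x + a)
    (g : X → ℝ)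
    (hbddabove : ∃ M : ℝ, ∀ x, g x ≤ M)
    (hveryproper : Integrable g (μ : Measure X))
    (k : ℝ) (hsol : ∀ x, T g x + k = g x)
    (hdual : ∀ n : ℕ,
      (((∫ x, (T^[n + 1]) g x ∂(μ : Measure X)) : ℝ) : EReal) =
        ⨆ ν : ProbabilityMeasure X,
          (((∫ x, g x ∂(ν : Measure X)) : ℝ) : EReal) - iterT 𝒯 n μ ν) :
    k = c := by
  obtain ⟨M, hM⟩ := hbddabove
  have hiter (n : ℕ) : ∫ x, T^[n + 1] g x ∂(μ : Measure X) =
      ∫ x, g x ∂(μ : Measure X) - (n + 1) * k := by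
    rw [iterate_eq_sub_nsmul_of_add_const_eq haff hsol,
      integral_sub hveryproper (integrable_const _)]
    simp
  apply le_antisymm
  · have hle := (le_iSup_of_le μ le_rfl).trans_eq (hdual 0).symm
    rw [hiter, iterT, hmin, Nat.cast_zero, zero_add, one_mul, ← EReal.coe_sub,
      EReal.coe_le_coe_iff] at hle
    linarith
  · refine le_of_forall_lt_imp_le_of_dense fun y hy => ?_
    have hlarge := hconv.eventually_coe_mul_le_iterT hbdd hlsc (hc ▸ EReal.coe_lt_coe hy)
    refine sub_nonpos.1 (nonpos_of_eventually_natCast_mul_le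
      (b := max M 0 - ∫ x, g x ∂(μ : Measure X) - (y - k)) ?_)
    filter_upwards [hlarge] with n hn
    have hle := (hdual n).trans_le (iSup_le fun ν => EReal.sub_le_sub
      (EReal.coe_le_coe (integral_le_max_zero_of_le hM)) (hn μ ν))
    rw [hiter, ← EReal.coe_sub, EReal.coe_le_coe_iff] at hle
    linarith

/-- Let `T` be a backward Kantorovich operator (monotone, affine on
constants) on a compact metric space `X` whose iterates satisfy the duality with the
convolution iterates `𝒯_n` of its transfer `𝒯`, and let `c` be the finite Mather constant.
If `g ∈ USC_σ(X)` is bounded above and a very proper backward solution at level `k`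
(`T g + k = g` and `∫ g dμ > −∞`, i.e. `g` integrable, for some minimal measure `μ`),
then `k = c`. -/
theorem stmt7 {X : Type*} [MetricSpace X] [CompactSpace X] [MeasurableSpace X] [BorelSpace X]
    (𝒯 : ProbabilityMeasure X → ProbabilityMeasure X → EReal)
    (hproper : ∃ μ ν, 𝒯 μ ν ≠ ⊤)
    (hbdd : ∃ m : ℝ, ∀ μ ν, (m : EReal) ≤ 𝒯 μ ν)
    (hlsc : LowerSemicontinuous
      (fun p : ProbabilityMeasure X × ProbabilityMeasure X => 𝒯 p.1 p.2))
    (hconv : ∀ (μ₁ ν₁ μ₂ ν₂ μ ν : ProbabilityMeasure X) (t : ℝ), 0 ≤ t → t ≤ 1 →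
      (μ : Measure X) =
        ENNReal.ofReal t • (μ₁ : Measure X) + ENNReal.ofReal (1 - t) • (μ₂ : Measure X) →
      (ν : Measure X) =
        ENNReal.ofReal t • (ν₁ : Measure X) + ENNReal.ofReal (1 - t) • (ν₂ : Measure X) →
      𝒯 μ ν ≤ (t : EReal) * 𝒯 μ₁ ν₁ + ((1 - t : ℝ) : EReal) * 𝒯 μ₂ ν₂)
    (c : ℝ) (hc : (c : EReal) = ⨅ μ, 𝒯 μ μ)
    (μ : ProbabilityMeasure X) (hmin : 𝒯 μ μ = (c : EReal))
    (T : (X → ℝ) → X → ℝ)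
    (hmono : ∀ f₁ f₂ : X → ℝ, (∀ x, f₁ x ≤ f₂ x) → ∀ x, T f₁ x ≤ T f₂ x)
    (haff : ∀ (f : X → ℝ) (a : ℝ) (x : X), T (fun y => f y + a) x = T f x + a)
    (g : X → ℝ)
    (hUSCσ : ∃ u : ℕ → X → ℝ, Monotone u ∧ (∀ n, UpperSemicontinuous (u n)) ∧
      ∀ x, Tendsto (fun n => u n x) atTop (nhds (g x)))
    (hbddabove : ∃ M : ℝ, ∀ x, g x ≤ M)
    (hveryproper : Integrable g (μ : Measure X))
    (k : ℝ) (hsol : ∀ x, T g x + k = g x)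
    (hdual : ∀ n : ℕ,
      (((∫ x, (T^[n + 1]) g x ∂(μ : Measure X)) : ℝ) : EReal) =
        ⨆ ν : ProbabilityMeasure X,
          (((∫ x, g x ∂(ν : Measure X)) : ℝ) : EReal) - iterT 𝒯 n μ ν) :
    k = c :=
  stmt7_general 𝒯 hbdd hlsc hconv c hc μ hmin T haff g hbddabove hveryproper k hsol hdual
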